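/- Let A be an N×N block matrix with block sizes n_1,...,n_n given by quasiseparable generators {d_k, q_k, a_k, p_k, g_k, b_k, h_k}, i.e., the (i,j) block of A equals d_i if i=j, p_i a_{i-1}···a_{j+1} q_j if i>j, and g_i b_{i+1}···b_{j-1} h_j if i<j. If A is strongly regular (all leading principal block minors are invertible), then A admits a block LU factorization A = LU where L is block unit lower triangular with quasiseparable generators {I_k, q̃_k, a_k, p_k, 0, 0, 0} and U is block upper triangular with generators {d̃_k, 0, 0, 0, g̃_k, b_k, h_k}, where d̃_1 = d_1, q̃_1 = q_1 d̃_1^{-1}, g̃_1 = g_1, f_1 = q̃_1 g̃_1, and for k ≥ 2: d̃_k = d_k − p_k f_{k-1} h_k, q̃_k = (q_k − a_k f_{k-1} h_k) d̃_k^{-1}, g̃_k = g_k − p_k f_{k-1} b_k, f_k = a_k f_{k-1} b_k + q̃_k g̃_k. -/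

import Mathlib

/-! The idea is block Gaussian elimination.  Write `T` for the transfer products of the lower
generators `(a, q̃)` and `S` for those of the upper generators `(g̃, b)`.  The auxiliary matrices of
the algorithm satisfy `f k = ∑ l ≤ k, T k l * S l k` (`sum_lowX_mul_upX`), so the Schur-complement
corrections `p f h`, `a f h`, `p f b` are exactly the off-diagonal contributions to the product of
`L` and `U`.  This gives the block identities `∑ l, T i l * U l j = a ⋯ a q j` (`sum_lowX_mul_upB`)
and `∑ l, L i l * S l j = g i b ⋯ b` (`sum_lowB_mul_upX`), and with them `A = L * U`
(`sum_lowB_mul_upB`).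

The only place where invertibility is used is `q̃ j * d̃ j = q j - a f h`, and the leading `K × K`
block part of the identity needs it only for `j + 1 < K`.  Thus strong induction works
(`isUnit_dt`): if `d̃ j` is invertible for `j < k`, the leading `k + 1` blocks factor as `L * U`,
so this truncated `U` is invertible; as its last block row is `(0, …, 0, d̃ k)`, the last diagonal
block of `U⁻¹` is a right inverse of `d̃ k`.

To avoid casts between `i` and `j + (i - j)`, transfer products are indexed here by both their
endpoints, extended by zero, and the generators `a, p, b, h` are shifted by one. -/

open Matrix

/-- Offset of the `k`-th block (0-based) in the scalar indexing: `ofs m k = n₁+⋯+n_k`. -/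
def ofs (m : ℕ → ℕ) (k : ℕ) : ℕ := ∑ i ∈ Finset.range k, m i

lemma ofs_le {m : ℕ → ℕ} {i n : ℕ} (h : i ≤ n) : ofs m i ≤ ofs m n := by
  apply Finset.sum_le_sum_of_subset
  intro x hx
  simp only [Finset.mem_range] at *
  omega

lemma ofs_lt {m : ℕ → ℕ} {i n : ℕ} (hi : i < n) (s : Fin (m i)) :
    ofs m i + (s : ℕ) < ofs m n := by
  have h1 : ofs m i + (s : ℕ) < ofs m (i + 1) := by
    have hs := s.isLt
    simp only [ofs, Finset.sum_range_succ]
    omega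
  have h2 : ofs m (i + 1) ≤ ofs m n := ofs_le hi
  omega

/-- The "transfer" product `a_{j+e} ⋯ a_{j+1} q_j` of lower quasiseparable generators. -/
def lowT {F : Type} [Field F] (rl m : ℕ → ℕ)
    (q : ∀ k : ℕ, Matrix (Fin (rl k)) (Fin (m k)) F)
    (a : ∀ k : ℕ, Matrix (Fin (rl k)) (Fin (rl (k - 1))) F)
    (j : ℕ) : (e : ℕ) → Matrix (Fin (rl (j + e))) (Fin (m j)) F
  | 0 => q j
  | e + 1 =>
    (show Matrix (Fin (rl (j + e + 1))) (Fin (rl (j + e))) F from a (j + e + 1)) *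
      lowT rl m q a j e

/-- The "transfer" product `g_i b_{i+1} ⋯ b_{i+e}` of upper quasiseparable generators. -/
def upT {F : Type} [Field F] (ru m : ℕ → ℕ)
    (g : ∀ k : ℕ, Matrix (Fin (m k)) (Fin (ru k)) F)
    (b : ∀ k : ℕ, Matrix (Fin (ru (k - 1))) (Fin (ru k)) F)
    (i : ℕ) : (e : ℕ) → Matrix (Fin (m i)) (Fin (ru (i + e))) F
  | 0 => g i
  | e + 1 =>
    upT ru m g b i e *
      (show Matrix (Fin (ru (i + e))) (Fin (ru (i + e + 1))) F from b (i + e + 1))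

/-- The leading principal `K × K` submatrix `A(1:K, 1:K)`. -/
def leadBlk {F : Type} [Field F] {N : ℕ} (A : Matrix (Fin N) (Fin N) F) (K : ℕ)
    (hK : K ≤ N) : Matrix (Fin K) (Fin K) F :=
  Matrix.of fun i j => A ⟨i.1, by have := i.isLt; omega⟩ ⟨j.1, by have := j.isLt; omega⟩

section LUAlg

variable {F : Type} [Field F] (m rl ru : ℕ → ℕ)
  (d : ∀ k : ℕ, Matrix (Fin (m k)) (Fin (m k)) F)
  (q : ∀ k : ℕ, Matrix (Fin (rl k)) (Fin (m k)) F)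
  (a : ∀ k : ℕ, Matrix (Fin (rl k)) (Fin (rl (k - 1))) F)
  (p : ∀ k : ℕ, Matrix (Fin (m k)) (Fin (rl (k - 1))) F)
  (g : ∀ k : ℕ, Matrix (Fin (m k)) (Fin (ru k)) F)
  (b : ∀ k : ℕ, Matrix (Fin (ru (k - 1))) (Fin (ru k)) F)
  (h : ∀ k : ℕ, Matrix (Fin (ru (k - 1))) (Fin (m k)) F)

/-- Algorithm 1 (fast quasiseparable LU): simultaneously computes
`(d̃ k, q̃ k, g̃ k, f k)` (0-based indexing). -/
noncomputable def luRec : ∀ k : ℕ,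
    Matrix (Fin (m k)) (Fin (m k)) F × Matrix (Fin (rl k)) (Fin (m k)) F ×
      Matrix (Fin (m k)) (Fin (ru k)) F × Matrix (Fin (rl k)) (Fin (ru k)) F
  | 0 => (d 0, q 0 * (d 0)⁻¹, g 0, q 0 * (d 0)⁻¹ * g 0)
  | k + 1 =>
    let fk : Matrix (Fin (rl k)) (Fin (ru k)) F := (luRec k).2.2.2
    let dt := d (k + 1) -
      (show Matrix (Fin (m (k + 1))) (Fin (rl k)) F from p (k + 1)) * fk *
        (show Matrix (Fin (ru k)) (Fin (m (k + 1))) F from h (k + 1))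
    let qt := (q (k + 1) -
      (show Matrix (Fin (rl (k + 1))) (Fin (rl k)) F from a (k + 1)) * fk *
        (show Matrix (Fin (ru k)) (Fin (m (k + 1))) F from h (k + 1))) * dt⁻¹
    let gt := g (k + 1) -
      (show Matrix (Fin (m (k + 1))) (Fin (rl k)) F from p (k + 1)) * fk *
        (show Matrix (Fin (ru k)) (Fin (ru (k + 1))) F from b (k + 1))
    (dt, qt, gt,
      (show Matrix (Fin (rl (k + 1))) (Fin (rl k)) F from a (k + 1)) * fk *
        (show Matrix (Fin (ru k)) (Fin (ru (k + 1))) F from b (k + 1)) + qt * gt)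

/-- `d̃ k` of Algorithm 1. -/
noncomputable def dTil (k : ℕ) : Matrix (Fin (m k)) (Fin (m k)) F :=
  (luRec m rl ru d q a p g b h k).1

/-- `q̃ k` of Algorithm 1. -/
noncomputable def qTil (k : ℕ) : Matrix (Fin (rl k)) (Fin (m k)) F :=
  (luRec m rl ru d q a p g b h k).2.1

/-- `g̃ k` of Algorithm 1. -/
noncomputable def gTil (k : ℕ) : Matrix (Fin (m k)) (Fin (ru k)) F :=
  (luRec m rl ru d q a p g b h k).2.2.1

end LUAlg

section Blocks

variable {F : Type} [Field F]

/-! ### Blocks indexed by both endpoints -/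

/-- The `(i, j)` block of the block diagonal matrix with diagonal blocks `D k`. -/
def dg {r c : ℕ → ℕ} (D : ∀ k, Matrix (Fin (r k)) (Fin (c k)) F) (i j : ℕ) :
    Matrix (Fin (r i)) (Fin (c j)) F :=
  Pi.single (M := fun i => Matrix (Fin (r i)) (Fin (c j)) F) j (D j) i

lemma dg_self {r c : ℕ → ℕ} (D : ∀ k, Matrix (Fin (r k)) (Fin (c k)) F) (i : ℕ) :
    dg D i i = D i := Pi.single_eq_same _ _

lemma dg_ne {r c : ℕ → ℕ} (D : ∀ k, Matrix (Fin (r k)) (Fin (c k)) F) {i j : ℕ} (hij : i ≠ j) :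
    dg D i j = 0 := Pi.single_eq_of_ne hij _

lemma sum_dg_mul {r c : ℕ → ℕ} (D : ∀ k, Matrix (Fin (r k)) (Fin (c k)) F) {n i s : ℕ}
    (hi : i < n) (X : ∀ k, Matrix (Fin (c k)) (Fin s) F) :
    ∑ k ∈ Finset.range n, dg D i k * X k = D i * X i := by
  rw [Finset.sum_eq_single i, dg_self]
  · intro k _ hk
    rw [dg_ne D hk.symm, Matrix.zero_mul]
  · intro h
    exact absurd (Finset.mem_range.2 hi) h

lemma sum_mul_dg {r c : ℕ → ℕ} (D : ∀ k, Matrix (Fin (r k)) (Fin (c k)) F) {n j s : ℕ}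
    (hj : j < n) (X : ∀ k, Matrix (Fin s) (Fin (r k)) F) :
    ∑ k ∈ Finset.range n, X k * dg D k j = X j * D j := by
  rw [Finset.sum_eq_single j, dg_self]
  · intro k _ hk
    rw [dg_ne D hk, Matrix.mul_zero]
  · intro h
    exact absurd (Finset.mem_range.2 hj) h

variable {m rl ru : ℕ → ℕ}

/-- The transfer product `a_i ⋯ a_{j+1} q_j` for `j ≤ i`, and `0` for `i < j`;
the argument `a k` stands for the generator `a_{k+1}`. -/
def lowX (a : ∀ k, Matrix (Fin (rl (k + 1))) (Fin (rl k)) F)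
    (q : ∀ k, Matrix (Fin (rl k)) (Fin (m k)) F) : ∀ i j, Matrix (Fin (rl i)) (Fin (m j)) F
  | 0, j => dg q 0 j
  | i + 1, j => a i * lowX a q i j + dg q (i + 1) j

/-- The transfer product `g_i b_{i+1} ⋯ b_j` for `i ≤ j`, and `0` for `j < i`;
the argument `b k` stands for the generator `b_{k+1}`. -/
def upX (b : ∀ k, Matrix (Fin (ru k)) (Fin (ru (k + 1))) F)
    (g : ∀ k, Matrix (Fin (m k)) (Fin (ru k)) F) (i : ℕ) : ∀ j, Matrix (Fin (m i)) (Fin (ru j)) F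
  | 0 => dg g i 0
  | j + 1 => upX b g i j * b j + dg g i (j + 1)

/-- The `(i, j)` block of the block lower triangular matrix with generators
`{D, q, a, p, 0, 0, 0}`; the argument `p k` stands for the generator `p_{k+1}`. -/
def lowB (a : ∀ k, Matrix (Fin (rl (k + 1))) (Fin (rl k)) F)
    (q : ∀ k, Matrix (Fin (rl k)) (Fin (m k)) F)
    (p : ∀ k, Matrix (Fin (m (k + 1))) (Fin (rl k)) F)
    (D : ∀ k, Matrix (Fin (m k)) (Fin (m k)) F) : ∀ i j, Matrix (Fin (m i)) (Fin (m j)) F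
  | 0, j => dg D 0 j
  | i + 1, j => p i * lowX a q i j + dg D (i + 1) j

/-- The `(i, j)` block of the block upper triangular matrix with generators
`{D, 0, 0, 0, g, b, h}`; the argument `h k` stands for the generator `h_{k+1}`. -/
def upB (b : ∀ k, Matrix (Fin (ru k)) (Fin (ru (k + 1))) F)
    (g : ∀ k, Matrix (Fin (m k)) (Fin (ru k)) F)
    (h : ∀ k, Matrix (Fin (ru k)) (Fin (m (k + 1))) F)
    (D : ∀ k, Matrix (Fin (m k)) (Fin (m k)) F) (i : ℕ) : ∀ j, Matrix (Fin (m i)) (Fin (m j)) F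
  | 0 => dg D i 0
  | j + 1 => upX b g i j * h j + dg D i (j + 1)

section Support

variable (a : ∀ k, Matrix (Fin (rl (k + 1))) (Fin (rl k)) F)
  (q : ∀ k, Matrix (Fin (rl k)) (Fin (m k)) F)
  (p : ∀ k, Matrix (Fin (m (k + 1))) (Fin (rl k)) F)
  (b : ∀ k, Matrix (Fin (ru k)) (Fin (ru (k + 1))) F)
  (g : ∀ k, Matrix (Fin (m k)) (Fin (ru k)) F)
  (h : ∀ k, Matrix (Fin (ru k)) (Fin (m (k + 1))) F)
  (D : ∀ k, Matrix (Fin (m k)) (Fin (m k)) F)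

lemma lowX_lt {i j : ℕ} (hij : i < j) : lowX a q i j = 0 := by
  induction i with
  | zero => exact dg_ne _ (by omega)
  | succ i ih => rw [lowX, ih (by omega), dg_ne _ (by omega), Matrix.mul_zero, add_zero]

lemma upX_lt {i j : ℕ} (hij : j < i) : upX b g i j = 0 := by
  induction j with
  | zero => exact dg_ne _ (by omega)
  | succ j ih => rw [upX, ih (by omega), dg_ne _ (by omega), Matrix.zero_mul, add_zero]

lemma lowX_self (i : ℕ) : lowX a q i i = q i := by
  cases i with
  | zero => exact dg_self _ _
  | succ i => rw [lowX, lowX_lt _ _ (by omega), dg_self, Matrix.mul_zero, zero_add]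

lemma upX_self (i : ℕ) : upX b g i i = g i := by
  cases i with
  | zero => exact dg_self _ _
  | succ i => rw [upX, upX_lt _ _ (by omega), dg_self, Matrix.zero_mul, zero_add]

lemma lowX_succ {i j : ℕ} (hij : j ≤ i) : lowX a q (i + 1) j = a i * lowX a q i j := by
  rw [lowX, dg_ne _ (by omega), add_zero]

lemma upX_succ {i j : ℕ} (hij : i ≤ j) : upX b g i (j + 1) = upX b g i j * b j := by
  rw [upX, dg_ne _ (by omega), add_zero]

lemma lowB_lt {i j : ℕ} (hij : i < j) : lowB a q p D i j = 0 := by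
  cases i with
  | zero => exact dg_ne _ (by omega)
  | succ i => rw [lowB, lowX_lt _ _ (by omega), dg_ne _ (by omega), Matrix.mul_zero, add_zero]

lemma upB_lt {i j : ℕ} (hij : j < i) : upB b g h D i j = 0 := by
  cases j with
  | zero => exact dg_ne _ (by omega)
  | succ j => rw [upB, upX_lt _ _ (by omega), dg_ne _ (by omega), Matrix.zero_mul, add_zero]

lemma lowB_self (i : ℕ) : lowB a q p D i i = D i := by
  cases i with
  | zero => exact dg_self _ _
  | succ i => rw [lowB, lowX_lt _ _ (by omega), dg_self, Matrix.mul_zero, zero_add]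

lemma upB_self (i : ℕ) : upB b g h D i i = D i := by
  cases i with
  | zero => exact dg_self _ _
  | succ i => rw [upB, upX_lt _ _ (by omega), dg_self, Matrix.zero_mul, zero_add]

lemma lowB_succ {i j : ℕ} (hij : j ≤ i) : lowB a q p D (i + 1) j = p i * lowX a q i j := by
  rw [lowB, dg_ne _ (by omega), add_zero]

lemma upB_succ {i j : ℕ} (hij : i ≤ j) : upB b g h D i (j + 1) = upX b g i j * h j := by
  rw [upB, dg_ne _ (by omega), add_zero]

end Support

/-! ### The block product of the two factors -/

/-- The recurrences of the fast LU algorithm, with `a, p, b, h` shifted by one.  The defining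
equation of `q̃ k` is only recorded in the form valid once `d̃ k` is known to be invertible. -/
structure Alg (d dt : ∀ k, Matrix (Fin (m k)) (Fin (m k)) F)
    (q qt : ∀ k, Matrix (Fin (rl k)) (Fin (m k)) F)
    (a : ∀ k, Matrix (Fin (rl (k + 1))) (Fin (rl k)) F)
    (p : ∀ k, Matrix (Fin (m (k + 1))) (Fin (rl k)) F)
    (g gt : ∀ k, Matrix (Fin (m k)) (Fin (ru k)) F)
    (b : ∀ k, Matrix (Fin (ru k)) (Fin (ru (k + 1))) F)
    (h : ∀ k, Matrix (Fin (ru k)) (Fin (m (k + 1))) F)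
    (f : ∀ k, Matrix (Fin (rl k)) (Fin (ru k)) F) : Prop where
  d_zero : dt 0 = d 0
  d_succ : ∀ k, dt (k + 1) = d (k + 1) - p k * f k * h k
  g_zero : gt 0 = g 0
  g_succ : ∀ k, gt (k + 1) = g (k + 1) - p k * f k * b k
  q_zero : IsUnit (dt 0) → qt 0 * dt 0 = q 0
  q_succ : ∀ k, IsUnit (dt (k + 1)) → qt (k + 1) * dt (k + 1) = q (k + 1) - a k * f k * h k
  f_zero : f 0 = qt 0 * gt 0
  f_succ : ∀ k, f (k + 1) = a k * f k * b k + qt (k + 1) * gt (k + 1)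

section Product

variable {d dt : ∀ k, Matrix (Fin (m k)) (Fin (m k)) F}
  {q qt : ∀ k, Matrix (Fin (rl k)) (Fin (m k)) F}
  {a : ∀ k, Matrix (Fin (rl (k + 1))) (Fin (rl k)) F}
  {p : ∀ k, Matrix (Fin (m (k + 1))) (Fin (rl k)) F}
  {g gt : ∀ k, Matrix (Fin (m k)) (Fin (ru k)) F}
  {b : ∀ k, Matrix (Fin (ru k)) (Fin (ru (k + 1))) F}
  {h : ∀ k, Matrix (Fin (ru k)) (Fin (m (k + 1))) F}
  {f : ∀ k, Matrix (Fin (rl k)) (Fin (ru k)) F}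

/-- A block row of the form `α T_k + (block diagonal row)` times a block column of the form
`S_k β + (block diagonal column)`, when the two cross terms vanish because `T` and `S` are
triangular. -/
lemma sum_step {r r' : ℕ → ℕ} {n k s t : ℕ} (hk : k + 1 < n)
    (α : Matrix (Fin (r (k + 1))) (Fin s) F) (T : ∀ l, Matrix (Fin s) (Fin (m l)) F)
    (D : ∀ l, Matrix (Fin (r l)) (Fin (m l)) F)
    (S : ∀ l, Matrix (Fin (m l)) (Fin t) F) (β : Matrix (Fin t) (Fin (r' (k + 1))) F)
    (E : ∀ l, Matrix (Fin (m l)) (Fin (r' l)) F)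
    (hT : T (k + 1) = 0) (hS : S (k + 1) = 0) :
    ∑ l ∈ Finset.range n, (α * T l + dg D (k + 1) l) * (S l * β + dg E l (k + 1)) =
      α * (∑ l ∈ Finset.range n, T l * S l) * β + D (k + 1) * E (k + 1) := by
  simp_rw [Matrix.mul_add]
  rw [Finset.sum_add_distrib, sum_mul_dg E hk, hT, Matrix.mul_zero, zero_add, dg_self]
  simp_rw [Matrix.add_mul]
  rw [Finset.sum_add_distrib, sum_dg_mul D hk, hS, Matrix.zero_mul, Matrix.mul_zero, add_zero,
    Matrix.mul_sum, Matrix.sum_mul]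
  simp_rw [Matrix.mul_assoc]

lemma sum_lowX_mul_upX (H : Alg d dt q qt a p g gt b h f) {n k : ℕ} (hk : k < n) :
    ∑ l ∈ Finset.range n, lowX a qt k l * upX b gt l k = f k := by
  induction k with
  | zero =>
    simp only [lowX]
    rw [sum_dg_mul _ hk, upX_self, H.f_zero]
  | succ k ih =>
    simp only [lowX, upX]
    rw [sum_step (r := rl) (r' := ru) hk (a k) (lowX a qt k) qt
        (fun l => upX b gt l k) (b k) gt (lowX_lt _ _ (by omega)) (upX_lt _ _ (by omega)),
      ih (by omega), H.f_succ]

lemma sum_lowX_mul_upB (H : Alg d dt q qt a p g gt b h f) {n i j : ℕ} (hij : j ≤ i) (hi : i < n)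
    (hu : IsUnit (dt j)) :
    ∑ l ∈ Finset.range n, lowX a qt i l * upB b gt h dt l j = lowX a q i j := by
  induction i, hij using Nat.le_induction with
  | base =>
    rw [lowX_self]
    cases j with
    | zero =>
      simp only [lowX]
      rw [sum_dg_mul _ hi, upB_self, H.q_zero hu]
    | succ k =>
      simp only [lowX, upB]
      rw [sum_step (r := rl) (r' := m) hi (a k) (lowX a qt k) qt
          (fun l => upX b gt l k) (h k) dt (lowX_lt _ _ (by omega)) (upX_lt _ _ (by omega)),
        sum_lowX_mul_upX H (by omega), H.q_succ k hu, add_sub_cancel]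
  | succ i hij ih =>
    rw [lowX_succ _ _ hij, ← ih (by omega)]
    simp only [lowX, Matrix.add_mul]
    rw [Finset.sum_add_distrib, sum_dg_mul _ hi, upB_lt _ _ _ _ (by omega), Matrix.mul_zero,
      add_zero, Matrix.mul_sum]
    simp_rw [Matrix.mul_assoc]

lemma sum_lowB_mul_upX (H : Alg d dt q qt a p g gt b h f) {n i j : ℕ} (hij : i ≤ j) (hj : j < n) :
    ∑ l ∈ Finset.range n, lowB a qt p (fun _ => 1) i l * upX b gt l j = upX b g i j := by
  induction j, hij using Nat.le_induction with
  | base =>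
    rw [upX_self]
    cases i with
    | zero =>
      simp only [lowB]
      rw [sum_dg_mul _ hj, upX_self, H.g_zero, Matrix.one_mul]
    | succ k =>
      simp only [lowB, upX]
      rw [sum_step (r := m) (r' := ru) hj (p k) (lowX a qt k) (fun _ => 1)
          (fun l => upX b gt l k) (b k) gt (lowX_lt _ _ (by omega)) (upX_lt _ _ (by omega)),
        sum_lowX_mul_upX H (by omega), Matrix.one_mul, H.g_succ k, add_sub_cancel]
  | succ j hij ih =>
    rw [upX_succ _ _ hij, ← ih (by omega)]
    simp only [upX, Matrix.mul_add]
    rw [Finset.sum_add_distrib, sum_mul_dg _ hj, lowB_lt _ _ _ _ (by omega), Matrix.zero_mul,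
      add_zero, Matrix.sum_mul]
    simp_rw [Matrix.mul_assoc]

/-- The block identity `A = L * U` on the leading `n` blocks.  Only `d̃ 0, …, d̃ (n - 2)` have to
be invertible, which is what makes the induction in `isUnit_dt` possible. -/
lemma sum_lowB_mul_upB (H : Alg d dt q qt a p g gt b h f) {n i j : ℕ} (hi : i < n) (hj : j < n)
    (hu : ∀ k, k + 1 < n → IsUnit (dt k)) :
    ∑ l ∈ Finset.range n, lowB a qt p (fun _ => 1) i l * upB b gt h dt l j =
      lowB a q p d i j + upB b g h (fun _ => 0) i j := by
  rcases lt_trichotomy i j with hij | rfl | hij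
  · obtain ⟨j, rfl⟩ : ∃ j', j = j' + 1 := ⟨j - 1, by omega⟩
    rw [lowB_lt _ _ _ _ hij, upB_succ _ _ _ _ (by omega), zero_add,
      ← sum_lowB_mul_upX H (by omega : i ≤ j) (by omega : j < n)]
    simp only [upB, Matrix.mul_add]
    rw [Finset.sum_add_distrib, sum_mul_dg _ hj, lowB_lt _ _ _ _ (by omega), Matrix.zero_mul,
      add_zero, Matrix.sum_mul]
    simp_rw [Matrix.mul_assoc]
  · rw [lowB_self, upB_self, add_zero]
    cases i with
    | zero =>
      simp only [lowB]
      rw [sum_dg_mul _ hi, upB_self, H.d_zero, Matrix.one_mul]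
    | succ k =>
      simp only [lowB, upB]
      rw [sum_step (r := m) (r' := m) hi (p k) (lowX a qt k) (fun _ => 1)
          (fun l => upX b gt l k) (h k) dt (lowX_lt _ _ (by omega)) (upX_lt _ _ (by omega)),
        sum_lowX_mul_upX H (by omega), Matrix.one_mul, H.d_succ k, add_sub_cancel]
  · obtain ⟨i, rfl⟩ : ∃ i', i = i' + 1 := ⟨i - 1, by omega⟩
    rw [upB_lt _ _ _ _ hij, lowB_succ _ _ _ _ (by omega), add_zero,
      ← sum_lowX_mul_upB H (by omega : j ≤ i) (by omega : i < n) (hu j (by omega))]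
    simp only [lowB, Matrix.add_mul]
    rw [Finset.sum_add_distrib, sum_dg_mul _ hi, upB_lt _ _ _ _ (by omega), Matrix.mul_zero,
      add_zero, Matrix.mul_sum]
    simp_rw [Matrix.mul_assoc]

end Product

/-! ### Invertibility of the diagonal blocks of the upper factor -/

/-- The matrix assembled from the first `n × n` of the blocks `B i j`, indexed by
(block, position in the block). -/
def asm (n : ℕ) (B : ∀ i j, Matrix (Fin (m i)) (Fin (m j)) F) :
    Matrix (Σ i : Fin n, Fin (m i)) (Σ i : Fin n, Fin (m i)) F :=
  Matrix.of fun x y => B x.1 y.1 x.2 y.2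

lemma asm_mul {n : ℕ} {B C E : ∀ i j, Matrix (Fin (m i)) (Fin (m j)) F}
    (hE : ∀ i < n, ∀ j < n, ∑ l ∈ Finset.range n, B i l * C l j = E i j) :
    asm n B * asm n C = asm n E := by
  ext ⟨i, s⟩ ⟨j, t⟩
  have := congrFun (congrFun (hE i i.2 j j.2) s) t
  simp only [asm, Matrix.mul_apply, Matrix.of_apply, Fintype.sum_sigma]
  rw [← this, Finset.sum_range, Matrix.sum_apply]
  rfl

/-- If the last block row of an invertible matrix is `(0, …, 0, B k k)`, then `B k k` is
invertible: the last diagonal block of the inverse is a right inverse of it. -/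
lemma isUnit_last {k : ℕ} {B : ∀ i j, Matrix (Fin (m i)) (Fin (m j)) F}
    (hB : ∀ j < k, B k j = 0) (hu : IsUnit (asm (k + 1) B)) : IsUnit (B k k) := by
  obtain ⟨V, hV⟩ := hu.exists_right_inv
  refine IsUnit.of_mul_eq_one
    (Matrix.of fun s t : Fin (m k) => V ⟨Fin.last k, s⟩ ⟨Fin.last k, t⟩) ?_
  ext s t
  have := congrFun (congrFun hV ⟨Fin.last k, s⟩) ⟨Fin.last k, t⟩
  rw [Matrix.mul_apply, Fintype.sum_sigma, Fin.sum_univ_castSucc, Finset.sum_eq_zero,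
    zero_add] at this
  · rw [Matrix.mul_apply]
    refine Eq.trans this ?_
    simp [Matrix.one_apply]
  · intro i _
    refine Finset.sum_eq_zero fun u _ => ?_
    have h0 : asm (k + 1) B ⟨Fin.last k, s⟩ ⟨i.castSucc, u⟩ = 0 :=
      congrFun (congrFun (hB i i.2) s) u
    rw [h0, zero_mul]

/-- Strong regularity makes every `d̃ k` invertible: by strong induction, each leading block part
of `A` factors through a truncation of `U` whose last block row is `(0, …, 0, d̃ k)`. -/
lemma isUnit_dt {d dt : ∀ k, Matrix (Fin (m k)) (Fin (m k)) F}
    {q qt : ∀ k, Matrix (Fin (rl k)) (Fin (m k)) F}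
    {a : ∀ k, Matrix (Fin (rl (k + 1))) (Fin (rl k)) F}
    {p : ∀ k, Matrix (Fin (m (k + 1))) (Fin (rl k)) F}
    {g gt : ∀ k, Matrix (Fin (m k)) (Fin (ru k)) F}
    {b : ∀ k, Matrix (Fin (ru k)) (Fin (ru (k + 1))) F}
    {h : ∀ k, Matrix (Fin (ru k)) (Fin (m (k + 1))) F}
    {f : ∀ k, Matrix (Fin (rl k)) (Fin (ru k)) F}
    (H : Alg d dt q qt a p g gt b h f) {n : ℕ}
    (hreg : ∀ k ≤ n, IsUnit (asm k fun i j => lowB a q p d i j + upB b g h (fun _ => 0) i j)) :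
    ∀ k < n, IsUnit (dt k) := by
  intro k
  induction k using Nat.strong_induction_on with
  | _ k ih =>
    intro hk
    have hA := hreg (k + 1) hk
    rw [← asm_mul fun i hi j hj => sum_lowB_mul_upB H hi hj
      fun l hl => ih l (by omega) (by omega)] at hA
    have hU := isUnit_of_mul_isUnit_right hA
    have := isUnit_last (fun j hj => upB_lt b gt h dt hj) hU
    rwa [upB_self] at this

/-! ### Scalar indexing and the generators of the statement -/

/-- The bijection from (block, position in the block) to scalar indices. -/
def blkEquiv (m : ℕ → ℕ) (n : ℕ) : (Σ i : Fin n, Fin (m i)) ≃ Fin (ofs m n) :=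
  finSigmaFinEquiv.trans (finCongr (Finset.sum_range m).symm)

lemma blkEquiv_mk {n i : ℕ} (hi : i < n) (s : Fin (m i)) :
    blkEquiv m n ⟨⟨i, hi⟩, s⟩ = ⟨ofs m i + s, ofs_lt hi s⟩ := by
  ext
  change ((finSigmaFinEquiv (⟨⟨i, hi⟩, s⟩ : Σ i : Fin n, Fin (m i)) : Fin _) : ℕ) =
    ∑ k ∈ Finset.range i, m k + (s : ℕ)
  rw [finSigmaFinEquiv_apply, Finset.sum_range]
  rfl

lemma blkEquiv_symm_mk {n i : ℕ} (hi : i < n) (s : Fin (m i))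
    (hs : ofs m i + (s : ℕ) < ofs m n) :
    (blkEquiv m n).symm ⟨ofs m i + s, hs⟩ = ⟨⟨i, hi⟩, s⟩ := by
  rw [Equiv.symm_apply_eq, blkEquiv_mk]

/-- The transfer products `lowT`, indexed by their length, agree with `lowX`. -/
lemma lowT_cast (a : ∀ k, Matrix (Fin (rl k)) (Fin (rl (k - 1))) F)
    (q : ∀ k, Matrix (Fin (rl k)) (Fin (m k)) F) (i j e : ℕ) (he : i = j + e) :
    (lowT rl m q a j e).submatrix (Fin.cast (congrArg rl he)) id =
      lowX (fun k => a (k + 1)) q i j := by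
  subst he
  change lowT rl m q a j e = _
  induction e with
  | zero => exact (lowX_self (fun k => a (k + 1)) q j).symm
  | succ e ih =>
    refine Eq.trans ?_ (lowX_succ (fun k => a (k + 1)) q (Nat.le_add_right j e)).symm
    rw [← ih]
    rfl

/-- The transfer products `upT`, indexed by their length, agree with `upX`. -/
lemma upT_cast (b : ∀ k, Matrix (Fin (ru (k - 1))) (Fin (ru k)) F)
    (g : ∀ k, Matrix (Fin (m k)) (Fin (ru k)) F) (i j e : ℕ) (he : j = i + e) :
    (upT ru m g b i e).submatrix id (Fin.cast (congrArg ru he)) =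
      upX (fun k => b (k + 1)) g i j := by
  subst he
  change upT ru m g b i e = _
  induction e with
  | zero => exact (upX_self (fun k => b (k + 1)) g i).symm
  | succ e ih =>
    refine Eq.trans ?_ (upX_succ (fun k => b (k + 1)) g (Nat.le_add_right i e)).symm
    rw [← ih]
    rfl

lemma low_entry (a : ∀ k, Matrix (Fin (rl k)) (Fin (rl (k - 1))) F)
    (q : ∀ k, Matrix (Fin (rl k)) (Fin (m k)) F)
    (p : ∀ k, Matrix (Fin (m k)) (Fin (rl (k - 1))) F)
    (D : ∀ k, Matrix (Fin (m k)) (Fin (m k)) F) {i j : ℕ} (hj : j < i) :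
    p i * (lowT rl m q a j (i - 1 - j)).submatrix
        (Fin.cast (congrArg rl (by omega : i - 1 = j + (i - 1 - j)))) id =
      lowB (fun k => a (k + 1)) q (fun k => p (k + 1)) D i j := by
  obtain ⟨i, rfl⟩ : ∃ i', i = i' + 1 := ⟨i - 1, by omega⟩
  rw [lowT_cast _ _ _ _ _ (by omega), lowB_succ _ _ _ _ (by omega)]
  rfl

lemma up_entry (b : ∀ k, Matrix (Fin (ru (k - 1))) (Fin (ru k)) F)
    (g : ∀ k, Matrix (Fin (m k)) (Fin (ru k)) F)
    (h : ∀ k, Matrix (Fin (ru (k - 1))) (Fin (m k)) F)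
    (D : ∀ k, Matrix (Fin (m k)) (Fin (m k)) F) {i j : ℕ} (hij : i < j) :
    (upT ru m g b i (j - 1 - i)).submatrix id
        (Fin.cast (congrArg ru (by omega : j - 1 = i + (j - 1 - i)))) * h j =
      upB (fun k => b (k + 1)) g (fun k => h (k + 1)) D i j := by
  obtain ⟨j, rfl⟩ : ∃ j', j = j' + 1 := ⟨j - 1, by omega⟩
  rw [upT_cast _ _ _ _ _ (by omega), upB_succ _ _ _ _ (by omega)]
  rfl

lemma alg_luRec (d : ∀ k, Matrix (Fin (m k)) (Fin (m k)) F)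
    (q : ∀ k, Matrix (Fin (rl k)) (Fin (m k)) F)
    (a : ∀ k, Matrix (Fin (rl k)) (Fin (rl (k - 1))) F)
    (p : ∀ k, Matrix (Fin (m k)) (Fin (rl (k - 1))) F)
    (g : ∀ k, Matrix (Fin (m k)) (Fin (ru k)) F)
    (b : ∀ k, Matrix (Fin (ru (k - 1))) (Fin (ru k)) F)
    (h : ∀ k, Matrix (Fin (ru (k - 1))) (Fin (m k)) F) :
    Alg d (dTil m rl ru d q a p g b h) q (qTil m rl ru d q a p g b h) (fun k => a (k + 1))
      (fun k => p (k + 1)) g (gTil m rl ru d q a p g b h) (fun k => b (k + 1))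
      (fun k => h (k + 1)) (fun k => (luRec m rl ru d q a p g b h k).2.2.2) where
  d_zero := rfl
  d_succ _ := rfl
  g_zero := rfl
  g_succ _ := rfl
  q_zero hu :=
    Matrix.nonsing_inv_mul_cancel_right _ _ ((Matrix.isUnit_iff_isUnit_det _).1 hu)
  q_succ _ hu :=
    Matrix.nonsing_inv_mul_cancel_right _ _ ((Matrix.isUnit_iff_isUnit_det _).1 hu)
  f_zero := rfl
  f_succ _ := rfl

end Blocks

/-- a strongly regular block quasiseparable matrix `A` given by
generators `{d, q, a, p, g, b, h}` admits a block LU factorization `A = L·U` where `L`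
is block unit lower triangular with generators `{I, q̃, a, p, 0, 0, 0}` and `U` is
block upper triangular with generators `{d̃, 0, 0, 0, g̃, b, h}`, the tilde generators
being produced by Algorithm 1 (0-based indexing). -/
theorem qs_block_LU {F : Type} [Field F]
    (n : ℕ) (m rl ru : ℕ → ℕ)
    (d : ∀ k : ℕ, Matrix (Fin (m k)) (Fin (m k)) F)
    (q : ∀ k : ℕ, Matrix (Fin (rl k)) (Fin (m k)) F)
    (a : ∀ k : ℕ, Matrix (Fin (rl k)) (Fin (rl (k - 1))) F)
    (p : ∀ k : ℕ, Matrix (Fin (m k)) (Fin (rl (k - 1))) F)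
    (g : ∀ k : ℕ, Matrix (Fin (m k)) (Fin (ru k)) F)
    (b : ∀ k : ℕ, Matrix (Fin (ru (k - 1))) (Fin (ru k)) F)
    (h : ∀ k : ℕ, Matrix (Fin (ru (k - 1))) (Fin (m k)) F)
    (A : Matrix (Fin (ofs m n)) (Fin (ofs m n)) F)
    (hdiag : ∀ (i : ℕ) (hi : i < n) (s t : Fin (m i)),
      A ⟨ofs m i + s, ofs_lt hi s⟩ ⟨ofs m i + t, ofs_lt hi t⟩ = d i s t)
    (hlow : ∀ (i j : ℕ) (hj : j < i) (hi : i < n) (s : Fin (m i)) (t : Fin (m j)),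
      A ⟨ofs m i + s, ofs_lt hi s⟩ ⟨ofs m j + t, ofs_lt (hj.trans hi) t⟩ =
        (p i * (lowT rl m q a j (i - 1 - j)).submatrix
            (Fin.cast (congrArg rl (by omega : i - 1 = j + (i - 1 - j)))) id) s t)
    (hup : ∀ (i j : ℕ) (hij : i < j) (hj : j < n) (s : Fin (m i)) (t : Fin (m j)),
      A ⟨ofs m i + s, ofs_lt (hij.trans hj) s⟩ ⟨ofs m j + t, ofs_lt hj t⟩ =
        ((upT ru m g b i (j - 1 - i)).submatrix id
            (Fin.cast (congrArg ru (by omega : j - 1 = i + (j - 1 - i)))) * h j) s t)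
    (hreg : ∀ (k : ℕ) (hk : k ≤ n), IsUnit (leadBlk A (ofs m k) (ofs_le hk)).det) :
    ∃ L U : Matrix (Fin (ofs m n)) (Fin (ofs m n)) F,
      A = L * U ∧
      -- L has generators {I, q̃, a, p, 0, 0, 0}:
      (∀ (i : ℕ) (hi : i < n) (s t : Fin (m i)),
        L ⟨ofs m i + s, ofs_lt hi s⟩ ⟨ofs m i + t, ofs_lt hi t⟩ =
          if s = t then 1 else 0) ∧
      (∀ (i j : ℕ) (hj : j < i) (hi : i < n) (s : Fin (m i)) (t : Fin (m j)),
        L ⟨ofs m i + s, ofs_lt hi s⟩ ⟨ofs m j + t, ofs_lt (hj.trans hi) t⟩ =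
          (p i * (lowT rl m (qTil m rl ru d q a p g b h) a j (i - 1 - j)).submatrix
              (Fin.cast (congrArg rl (by omega : i - 1 = j + (i - 1 - j)))) id) s t) ∧
      (∀ (i j : ℕ) (hij : i < j) (hj : j < n) (s : Fin (m i)) (t : Fin (m j)),
        L ⟨ofs m i + s, ofs_lt (hij.trans hj) s⟩ ⟨ofs m j + t, ofs_lt hj t⟩ = 0) ∧
      -- U has generators {d̃, 0, 0, 0, g̃, b, h}:
      (∀ (i : ℕ) (hi : i < n) (s t : Fin (m i)),
        U ⟨ofs m i + s, ofs_lt hi s⟩ ⟨ofs m i + t, ofs_lt hi t⟩ =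
          dTil m rl ru d q a p g b h i s t) ∧
      (∀ (i j : ℕ) (hj : j < i) (hi : i < n) (s : Fin (m i)) (t : Fin (m j)),
        U ⟨ofs m i + s, ofs_lt hi s⟩ ⟨ofs m j + t, ofs_lt (hj.trans hi) t⟩ = 0) ∧
      (∀ (i j : ℕ) (hij : i < j) (hj : j < n) (s : Fin (m i)) (t : Fin (m j)),
        U ⟨ofs m i + s, ofs_lt (hij.trans hj) s⟩ ⟨ofs m j + t, ofs_lt hj t⟩ =
          ((upT ru m (gTil m rl ru d q a p g b h) b i (j - 1 - i)).submatrix id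
              (Fin.cast (congrArg ru (by omega : j - 1 = i + (j - 1 - i)))) *
            h j) s t) := by
  have H := alg_luRec (m := m) d q a p g b h
  -- the blocks of `A` in terms of the endpoint-indexed transfer products
  have hA : ∀ (i j : ℕ) (hi : i < n) (hj : j < n) (s : Fin (m i)) (t : Fin (m j)),
      A ⟨ofs m i + s, ofs_lt hi s⟩ ⟨ofs m j + t, ofs_lt hj t⟩ =
        (lowB (fun k => a (k + 1)) q (fun k => p (k + 1)) d i j +
          upB (fun k => b (k + 1)) g (fun k => h (k + 1)) (fun _ => 0) i j) s t := by
    intro i j hi hj s t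
    rcases lt_trichotomy i j with hij | rfl | hij
    · rw [hup i j hij hj, up_entry b g h (fun _ => 0) hij, lowB_lt _ _ _ _ hij, zero_add]
    · rw [hdiag i hi, lowB_self, upB_self, add_zero]
    · rw [hlow i j hij hi, low_entry a q p d hij, upB_lt _ _ _ _ hij, add_zero]
  have hsub : ∀ (k : ℕ) (hk : k ≤ n),
      (leadBlk A (ofs m k) (ofs_le hk)).submatrix (blkEquiv m k) (blkEquiv m k) =
        asm k fun i j => lowB (fun k => a (k + 1)) q (fun k => p (k + 1)) d i j +
          upB (fun k => b (k + 1)) g (fun k => h (k + 1)) (fun _ => 0) i j := by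
    intro k hk
    ext ⟨⟨i, hi⟩, s⟩ ⟨⟨j, hj⟩, t⟩
    rw [Matrix.submatrix_apply, blkEquiv_mk, blkEquiv_mk]
    exact hA i j (hi.trans_le hk) (hj.trans_le hk) s t
  have hunit : ∀ k < n, IsUnit (dTil m rl ru d q a p g b h k) := by
    refine isUnit_dt H fun k hk => ?_
    rw [← hsub k hk, Matrix.isUnit_iff_isUnit_det, Matrix.det_submatrix_equiv_self]
    exact hreg k hk
  have hLU := asm_mul fun i hi j hj => sum_lowB_mul_upB (n := n) H hi hj
    fun k hk => hunit k (by omega)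
  refine ⟨(asm n (lowB (fun k => a (k + 1)) (qTil m rl ru d q a p g b h) (fun k => p (k + 1))
      fun _ => 1)).submatrix (blkEquiv m n).symm (blkEquiv m n).symm,
    (asm n (upB (fun k => b (k + 1)) (gTil m rl ru d q a p g b h) (fun k => h (k + 1))
      (dTil m rl ru d q a p g b h))).submatrix (blkEquiv m n).symm (blkEquiv m n).symm,
    ?_, ?_, ?_, ?_, ?_, ?_, ?_⟩
  · rw [Matrix.submatrix_mul_equiv, hLU, ← hsub n le_rfl]
    ext x y
    simp [leadBlk]
  · intro i hi s t
    rw [Matrix.submatrix_apply, blkEquiv_symm_mk hi, blkEquiv_symm_mk hi]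
    simp only [asm, Matrix.of_apply, lowB_self, Matrix.one_apply]
  · intro i j hj hi s t
    rw [Matrix.submatrix_apply, blkEquiv_symm_mk hi, blkEquiv_symm_mk (hj.trans hi),
      low_entry a _ p (fun _ => 1) hj]
    rfl
  · intro i j hij hj s t
    rw [Matrix.submatrix_apply, blkEquiv_symm_mk hj, blkEquiv_symm_mk (hij.trans hj)]
    simp only [asm, Matrix.of_apply, lowB_lt _ _ _ _ hij, Matrix.zero_apply]
  · intro i hi s t
    rw [Matrix.submatrix_apply, blkEquiv_symm_mk hi, blkEquiv_symm_mk hi]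
    simp only [asm, Matrix.of_apply, upB_self]
  · intro i j hj hi s t
    rw [Matrix.submatrix_apply, blkEquiv_symm_mk hi, blkEquiv_symm_mk (hj.trans hi)]
    simp only [asm, Matrix.of_apply, upB_lt _ _ _ _ hj, Matrix.zero_apply]
  · intro i j hij hj s t
    rw [Matrix.submatrix_apply, blkEquiv_symm_mk hj, blkEquiv_symm_mk (hij.trans hj),
      up_entry b _ h (dTil m rl ru d q a p g b h) hij]
    rfl
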